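/- Let A : ℝ² → ℝ^{n×n} be a C² family of real symmetric matrices with a non-degenerate conical point at α between λ₁ and λ₂ (λ₁(α) = λ₂(α) < λ₃(α) and det J_α(A^α) ≠ 0), and let B ∈ C²(Ω, ℝ^{2×2}) be the 2×2 block of a C² orthogonal block diagonalization M(r)ᵀA(r)M(r) = B(r) ⊕ Λ(r) near α. Then there exist an open neighborhood Ω₂ of α and a constant C₂ > 0 such that for all r ∈ Ω₂, both Newton steps are defined and |σ(B, r) − σ(Ã^r, r)| ≤ C₂ |r − α|², where Ã^r(·) is the 2×2 matrix-valued function Ã^r(s) = (⟨vᵢ(r), A(s)vⱼ(r)⟩)_{i,j=1,2} built from orthonormal eigenvectors v₁(r), v₂(r) of A(r) for λ₁(r), λ₂(r). -/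

import Mathlib

noncomputable section
open Matrix

/-- Partial derivative in the `x` direction. -/
def pdx {E : Type*} [NormedAddCommGroup E] [NormedSpace ℝ E] (f : ℝ × ℝ → E) (r : ℝ × ℝ) : E :=
  fderiv ℝ f r (1, 0)

/-- Partial derivative in the `y` direction. -/
def pdy {E : Type*} [NormedAddCommGroup E] [NormedSpace ℝ E] (f : ℝ × ℝ → E) (r : ℝ × ℝ) : E :=
  fderiv ℝ f r (0, 1)

/-- The target function `F(S) = (S₁₁ − S₂₂, 2 S₁₂)` of a 2×2 matrix family. -/
def Ftar (S : ℝ × ℝ → Matrix (Fin 2) (Fin 2) ℝ) (r : ℝ × ℝ) : ℝ × ℝ :=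
  (S r 0 0 - S r 1 1, 2 * S r 0 1)

/-- The Jacobian `J_r(S) = D_r F(S)` of the target function. -/
def Jmat (S : ℝ × ℝ → Matrix (Fin 2) (Fin 2) ℝ) (r : ℝ × ℝ) : Matrix (Fin 2) (Fin 2) ℝ :=
  !![pdx (fun p => S p 0 0 - S p 1 1) r, pdy (fun p => S p 0 0 - S p 1 1) r;
     pdx (fun p => 2 * S p 0 1) r, pdy (fun p => 2 * S p 0 1) r]

/-- Action of a 2×2 matrix on `ℝ × ℝ`. -/
def mulVec2 (M : Matrix (Fin 2) (Fin 2) ℝ) (v : ℝ × ℝ) : ℝ × ℝ :=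
  (M 0 0 * v.1 + M 0 1 * v.2, M 1 0 * v.1 + M 1 1 * v.2)

/-- The family `A` expressed in the constant basis `v₁, v₂`:
the 2×2 matrix `Ã(r) = (⟨vᵢ, A(r) vⱼ⟩)`. -/
def tildeA {n : ℕ} (A : ℝ × ℝ → Matrix (Fin n) (Fin n) ℝ) (v₁ v₂ : Fin n → ℝ) :
    ℝ × ℝ → Matrix (Fin 2) (Fin 2) ℝ := fun r =>
  !![v₁ ⬝ᵥ (A r).mulVec v₁, v₁ ⬝ᵥ (A r).mulVec v₂;
     v₂ ⬝ᵥ (A r).mulVec v₁, v₂ ⬝ᵥ (A r).mulVec v₂]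

/-- The discriminant of a 2×2 symmetric matrix family. -/
def discB (B : ℝ × ℝ → Matrix (Fin 2) (Fin 2) ℝ) (r : ℝ × ℝ) : ℝ :=
  (B r 0 0 - B r 1 1) ^ 2 + 4 * (B r 0 1) ^ 2

/-- The Hessian (matrix of second partial derivatives) of `g : ℝ² → ℝ`. -/
def Hess2 (g : ℝ × ℝ → ℝ) (α : ℝ × ℝ) : Matrix (Fin 2) (Fin 2) ℝ :=
  !![pdx (fun r => pdx g r) α, pdx (fun r => pdy g r) α;
     pdy (fun r => pdx g r) α, pdy (fun r => pdy g r) α]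

/-- The upper-left 2×2 block of an `n×n` matrix family (`2 < n`). -/
def topBlock {n : ℕ} (hn : 2 < n) (C : ℝ × ℝ → Matrix (Fin n) (Fin n) ℝ) :
    ℝ × ℝ → Matrix (Fin 2) (Fin 2) ℝ := fun r =>
  !![C r ⟨0, by omega⟩ ⟨0, by omega⟩, C r ⟨0, by omega⟩ ⟨1, by omega⟩;
     C r ⟨1, by omega⟩ ⟨0, by omega⟩, C r ⟨1, by omega⟩ ⟨1, by omega⟩]

/-!
The Newton step `σ(f, r) = r - f'(r)⁻¹ f(r)` does not change when `f` is composed with an invertible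
linear map. Conjugating a symmetric `2 × 2` matrix by an orthogonal matrix acts linearly and
invertibly on `F`, so `σ(Ã^r, r)` may be computed in any orthonormal frame of the plane spanned by
the eigenvectors of `A r`, in particular in the smooth frame `P r` of the block diagonalization,
frozen at `r`. The eigenvectors lie in that plane because `χ_B(A)` annihilates both them and the
frame, while `χ_B(A) + Pᵀ P` is invertible at `α` by the spectral gap, hence near `α`.

It remains to compare `F(P A Pᵀ)` for the moving and for the frozen frame. The values at `r` agree.
Since `P` is orthonormal and invariant, the derivatives differ by `F` of the commutator
`[P' Pᵀ, B]`, which is a rotation by a quarter turn of `F(B)` times twice the connection form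
`⟨p₀', p₁⟩`. As `F(B)` vanishes at `α`, both `F(B)` and the difference of the derivatives are
`O(|r - α|)`, and `L⁻¹ - L'⁻¹ = L⁻¹ (L' - L) L'⁻¹` makes the Newton steps differ by
`O(|r - α|²)`.
-/

section LinearAlgebra

open Polynomial in
lemma aeval_mul_eq_mul_aeval {R m k : Type*} [CommRing R] [Fintype m] [DecidableEq m] [Fintype k]
    [DecidableEq k] {A : Matrix m m R} {B : Matrix k k R} {X : Matrix m k R}
    (h : A * X = X * B) (f : R[X]) : aeval A f * X = X * aeval B f := by
  induction f using Polynomial.induction_on' with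
  | add f g hf hg => simp only [map_add, Matrix.add_mul, Matrix.mul_add, hf, hg]
  | monomial e a =>
    have hpow : A ^ e * X = X * B ^ e := by
      induction e with
      | zero => simp
      | succ e ih => rw [pow_succ, Matrix.mul_assoc, h, ← Matrix.mul_assoc, ih, Matrix.mul_assoc,
          ← pow_succ]
    simp only [aeval_monomial, Algebra.algebraMap_eq_smul_one, smul_mul_assoc, one_mul,
      Matrix.smul_mul, Matrix.mul_smul, hpow]

lemma transpose_mul_mul_eq_self {R m k l : Type*} [CommRing R] [Fintype m] [DecidableEq m]
    [Fintype k] [DecidableEq k] [Fintype l] [DecidableEq l] {A : Matrix m m R} {B : Matrix k k R}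
    {P : Matrix k m R} {D : Matrix l l R} {Y : Matrix m l R} (hP : P * Pᵀ = 1)
    (hAP : A * Pᵀ = Pᵀ * B) (hAY : A * Y = Y * D) (hBD : B.charpoly = D.charpoly)
    (hdet : IsUnit (Polynomial.aeval A B.charpoly + Pᵀ * P)) : Pᵀ * (P * Y) = Y := by
  have hχP : Polynomial.aeval A B.charpoly * Pᵀ = 0 := by
    rw [aeval_mul_eq_mul_aeval hAP, aeval_self_charpoly, Matrix.mul_zero]
  have hχY : Polynomial.aeval A B.charpoly * Y = 0 := by
    rw [aeval_mul_eq_mul_aeval hAY, hBD, aeval_self_charpoly, Matrix.mul_zero]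
  have hzero : (Polynomial.aeval A B.charpoly + Pᵀ * P) * (Y - Pᵀ * (P * Y)) = 0 := by
    have hPY : P * (Y - Pᵀ * (P * Y)) = 0 := by
      rw [Matrix.mul_sub, ← Matrix.mul_assoc P, hP, Matrix.one_mul, sub_self]
    rw [Matrix.add_mul, Matrix.mul_assoc Pᵀ, hPY, Matrix.mul_zero, add_zero, Matrix.mul_sub,
      ← Matrix.mul_assoc, hχP, hχY, Matrix.zero_mul, sub_zero]
  obtain ⟨G, hG⟩ := hdet.exists_left_inv
  have hcancel := congrArg (G * ·) hzero
  simp only [← Matrix.mul_assoc, hG, Matrix.one_mul, Matrix.mul_zero] at hcancel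
  simpa only [Matrix.mul_assoc] using (sub_eq_zero.mp hcancel).symm

lemma eq_smul_one_of_charpoly_eq_sq {k : Type*} [Fintype k] [DecidableEq k] {B : Matrix k k ℝ}
    (hB : B.IsSymm) {μ : ℝ} (h : B.charpoly = (Polynomial.X - Polynomial.C μ) ^ 2) :
    B = μ • 1 := by
  have hsq : (B - μ • 1) * (B - μ • 1) = 0 := by
    simpa [h, sq, Algebra.algebraMap_eq_smul_one] using aeval_self_charpoly B
  have hsymm : (B - μ • (1 : Matrix k k ℝ))ᴴ = B - μ • 1 := by
    rw [conjTranspose_eq_transpose_of_trivial, transpose_sub, transpose_smul, transpose_one, hB.eq]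
  exact sub_eq_zero.mp (conjTranspose_mul_self_eq_zero.mp (by rw [hsymm, hsq]))

lemma card_le_rank_sub_smul_one_add {m : Type*} [Fintype m] [DecidableEq m]
    {A V : Matrix m m ℝ} {l : m → ℝ} (hV : Vᵀ * V = 1) (hA : A = V * diagonal l * Vᵀ) {μ : ℝ}
    {s : Finset m} (hs : ∀ k ∉ s, l k ≠ μ) : Fintype.card m ≤ (A - μ • 1).rank + s.card := by
  have hV' : V * Vᵀ = 1 := mul_eq_one_comm.mp hV
  have hdetV : IsUnit V.det := V.isUnit_iff_isUnit_det.mp ⟨⟨V, Vᵀ, hV', hV⟩, rfl⟩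
  have hshift : A - μ • 1 = V * diagonal (fun k => l k - μ) * Vᵀ := by
    rw [← diagonal_sub, ← smul_one_eq_diagonal, Matrix.mul_sub, Matrix.sub_mul, ← hA,
      Matrix.mul_smul, Matrix.smul_mul, Matrix.mul_one, hV']
  rw [hshift, rank_mul_eq_left_of_isUnit_det _ _ (by rwa [det_transpose]),
    rank_mul_eq_right_of_isUnit_det _ _ hdetV, rank_diagonal, Fintype.card_subtype,
    ← Finset.card_univ]
  refine (Finset.card_le_card fun k _ => ?_).trans (Finset.card_union_le _ _)
  by_cases hk : k ∈ s
  · exact Finset.mem_union_right _ hk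
  · exact Finset.mem_union_left _ (by simpa [sub_eq_zero] using hs k hk)

lemma ker_sub_smul_one_eq_range_transpose {m k : Type*} [Fintype m] [DecidableEq m] [Fintype k]
    [DecidableEq k] {A : Matrix m m ℝ} {P : Matrix k m ℝ} {μ : ℝ} (hP : P * Pᵀ = 1)
    (hAP : A * Pᵀ = μ • Pᵀ) (hrank : Fintype.card m ≤ (A - μ • 1).rank + Fintype.card k) :
    LinearMap.ker (A - μ • 1).mulVecLin = LinearMap.range Pᵀ.mulVecLin := by
  have hinj : Function.Injective Pᵀ.mulVecLin := by
    refine Function.LeftInverse.injective (g := P.mulVecLin) fun x => ?_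
    simp only [mulVecLin_apply, mulVec_mulVec, hP, one_mulVec]
  symm
  refine Submodule.eq_of_le_of_finrank_le ?_ ?_
  · rintro _ ⟨x, rfl⟩
    rw [LinearMap.mem_ker, mulVecLin_apply, mulVecLin_apply, mulVec_mulVec, Matrix.sub_mul, hAP,
      Matrix.smul_mul, Matrix.one_mul, sub_self, zero_mulVec]
  · have hdim := (A - μ • 1).mulVecLin.finrank_range_add_finrank_ker
    rw [LinearMap.finrank_range_of_inj hinj]
    simp only [Module.finrank_fintype_fun_eq_card] at hdim ⊢
    rw [Matrix.rank] at hrank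
    lia

lemma isUnit_sub_smul_one_sq_add {m k : Type*} [Fintype m] [DecidableEq m] [Fintype k]
    [DecidableEq k] {A : Matrix m m ℝ} {P : Matrix k m ℝ} {μ : ℝ} (hA : A.IsSymm)
    (hP : P * Pᵀ = 1) (hAP : A * Pᵀ = μ • Pᵀ)
    (hrank : Fintype.card m ≤ (A - μ • 1).rank + Fintype.card k) :
    IsUnit ((A - μ • 1) ^ 2 + Pᵀ * P) := by
  have hsymm : (A - μ • (1 : Matrix m m ℝ))ᵀ = A - μ • 1 := by
    rw [transpose_sub, transpose_smul, transpose_one, hA.eq]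
  have hPA : P * (A - μ • 1) = 0 := by
    rw [← transpose_inj, transpose_mul, hsymm, Matrix.sub_mul, hAP, Matrix.smul_mul,
      Matrix.one_mul, sub_self, transpose_zero]
  refine (isUnit_iff_isUnit_det _).mpr (isUnit_iff_ne_zero.mpr fun hdet => ?_)
  obtain ⟨u, hu0, hu⟩ := exists_mulVec_eq_zero_iff.mpr hdet
  have hPu : P *ᵥ u = 0 := by
    have h := congrArg (P *ᵥ ·) hu
    simpa only [mulVec_mulVec, Matrix.mul_add, sq, ← Matrix.mul_assoc, hPA, hP, Matrix.zero_mul,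
      zero_add, Matrix.one_mul, mulVec_zero] using h
  have hsq : ((A - μ • 1)ᴴ * (A - μ • 1)) *ᵥ u = 0 := by
    rw [conjTranspose_eq_transpose_of_trivial, hsymm]
    rwa [add_mulVec, ← mulVec_mulVec _ Pᵀ, hPu, mulVec_zero, add_zero, sq] at hu
  have hker : u ∈ LinearMap.ker (A - μ • 1).mulVecLin :=
    (conjTranspose_mul_self_mulVec_eq_zero _ _).mp hsq
  rw [ker_sub_smul_one_eq_range_transpose hP hAP hrank] at hker
  obtain ⟨x, rfl⟩ := hker
  have hx : x = 0 := by
    simpa only [mulVecLin_apply, mulVec_mulVec, hP, one_mulVec] using hPu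
  exact hu0 (by rw [hx, map_zero])

end LinearAlgebra

section TargetFunction

/-- The target function `F` on a single matrix, so that `Ftar S r = target (S r)` definitionally. It
vanishes on a symmetric matrix exactly when the two eigenvalues coincide. -/
def target (S : Matrix (Fin 2) (Fin 2) ℝ) : ℝ × ℝ := (S 0 0 - S 1 1, 2 * S 0 1)

/-- The matrix of the conjugation `S ↦ Q S Qᵀ` in the coordinates `F(S)` of the trace-free part of a
symmetric `S`, for orthogonal `Q`. -/
def targetConj (Q : Matrix (Fin 2) (Fin 2) ℝ) : Matrix (Fin 2) (Fin 2) ℝ :=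
  !![Q 0 0 ^ 2 - Q 1 0 ^ 2, Q 0 0 * Q 0 1 - Q 1 0 * Q 1 1;
     2 * (Q 0 0 * Q 1 0), Q 0 0 * Q 1 1 + Q 0 1 * Q 1 0]

lemma target_mul_mul_transpose {Q S : Matrix (Fin 2) (Fin 2) ℝ} (hQ : Q * Qᵀ = 1)
    (hS : S.IsSymm) : target (Q * S * Qᵀ) = mulVec2 (targetConj Q) (target S) := by
  have h00 := congrFun (congrFun hQ 0) 0
  have h01 := congrFun (congrFun hQ 0) 1
  have h11 := congrFun (congrFun hQ 1) 1
  have hS10 := hS.apply 0 1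
  simp only [mul_apply, Fin.sum_univ_two, transpose_apply, one_apply_eq, one_apply_ne, ne_eq,
    zero_ne_one, not_false_eq_true] at h00 h01 h11
  ext
  · simp only [target, mulVec2, targetConj, mul_apply, Fin.sum_univ_two, transpose_apply, hS10,
      of_apply, cons_val', cons_val_zero, cons_val_one, cons_val_fin_one]
    linear_combination S 1 1 * (h00 - h11)
  · simp only [target, mulVec2, targetConj, mul_apply, Fin.sum_univ_two, transpose_apply, hS10,
      of_apply, cons_val', cons_val_zero, cons_val_one, cons_val_fin_one]
    linear_combination 2 * S 1 1 * h01

lemma det_targetConj_ne_zero {Q : Matrix (Fin 2) (Fin 2) ℝ} (hQ : Q * Qᵀ = 1) :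
    (targetConj Q).det ≠ 0 := by
  have hQ' : Qᵀ * Q = 1 := mul_eq_one_comm.mp hQ
  have hcol := congrFun (congrFun hQ' 0) 0
  simp only [mul_apply, Fin.sum_univ_two, transpose_apply, one_apply_eq] at hcol
  have hdet : (targetConj Q).det = Q.det := by
    simp only [targetConj, det_fin_two, of_apply, cons_val', cons_val_zero, cons_val_one,
      cons_val_fin_one]
    linear_combination (Q 0 0 * Q 1 1 - Q 0 1 * Q 1 0) * hcol
  rw [hdet]
  exact det_ne_zero_of_right_inverse hQ

lemma target_lie {K S : Matrix (Fin 2) (Fin 2) ℝ} (hK : Kᵀ = -K) (hS : S.IsSymm) :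
    target ⁅K, S⁆ = K 0 1 • (2 : ℝ) • ((target S).2, -(target S).1) := by
  have hdiag (i : Fin 2) : K i i = 0 := self_eq_neg.mp (congrFun (congrFun hK i) i)
  have h10 : K 1 0 = -K 0 1 := congrFun (congrFun hK 0) 1
  ext <;> simp only [target, Ring.lie_def, Matrix.sub_apply, mul_apply, Fin.sum_univ_two,
    hS.apply 0 1, hdiag, h10, Prod.smul_mk, smul_eq_mul] <;> ring

lemma target_add (S T : Matrix (Fin 2) (Fin 2) ℝ) : target (S + T) = target S + target T := by
  ext <;> simp only [target, Matrix.add_apply, Prod.fst_add, Prod.snd_add] <;> ring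

end TargetFunction

section MatrixCalculus

open Filter Topology

variable {E : Type*} [NormedAddCommGroup E] [NormedSpace ℝ E] {m : Type*} [Fintype m]

/-- The derivative at `r` in the direction `d` of a matrix-valued function, taken entry by entry,
so that no norm on matrices has to be chosen. -/
def entryDeriv {k l : Type*} (X : E → Matrix k l ℝ) (r d : E) : Matrix k l ℝ :=
  of fun i j => fderiv ℝ (fun s => X s i j) r d

lemma entryDeriv_const {k l : Type*} (C : Matrix k l ℝ) (r d : E) :
    entryDeriv (fun _ => C) r d = 0 := by
  ext i j
  simp [entryDeriv]

lemma entryDeriv_mul {k l : Type*} {X : E → Matrix k m ℝ} {Y : E → Matrix m l ℝ} {r : E}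
    (hX : ∀ i j, DifferentiableAt ℝ (fun s => X s i j) r)
    (hY : ∀ i j, DifferentiableAt ℝ (fun s => Y s i j) r) (d : E) :
    entryDeriv (fun s => X s * Y s) r d = entryDeriv X r d * Y r + X r * entryDeriv Y r d := by
  ext i j
  simp only [entryDeriv, of_apply, mul_apply, Matrix.add_apply]
  rw [fderiv_fun_sum fun x _ => (hX i x).fun_mul (hY x j), _root_.sum_apply,
    ← Finset.sum_add_distrib]
  refine Finset.sum_congr rfl fun x _ => ?_
  rw [fderiv_fun_mul (hX i x) (hY x j)]
  simp only [_root_.add_apply, _root_.smul_apply, smul_eq_mul]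
  ring

lemma differentiableAt_mul_apply {k l : Type*} {X : E → Matrix k m ℝ} {Y : E → Matrix m l ℝ} {r : E}
    (hX : ∀ i j, DifferentiableAt ℝ (fun s => X s i j) r)
    (hY : ∀ i j, DifferentiableAt ℝ (fun s => Y s i j) r) (i : k) (j : l) :
    DifferentiableAt ℝ (fun s => (X s * Y s) i j) r := by
  simp only [mul_apply]
  exact DifferentiableAt.fun_sum fun x _ => (hX i x).fun_mul (hY x j)

lemma differentiableAt_compression {k : Type*} {P : E → Matrix k m ℝ} {A : E → Matrix m m ℝ} {r : E}
    (hP : ∀ i x, DifferentiableAt ℝ (fun s => P s i x) r)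
    (hA : ∀ x y, DifferentiableAt ℝ (fun s => A s x y) r) (i j : k) :
    DifferentiableAt ℝ (fun s => (P s * A s * (P s)ᵀ) i j) r := by
  simp only [mul_apply, transpose_apply]
  fun_prop

lemma transpose_entryDeriv_mul_transpose {k : Type*} [DecidableEq k] {P : E → Matrix k m ℝ}
    {r : E} (hP : ∀ i x, DifferentiableAt ℝ (fun s => P s i x) r)
    (hPP : ∀ᶠ s in 𝓝 r, P s * (P s)ᵀ = 1) (d : E) :
    (entryDeriv P r d * (P r)ᵀ)ᵀ = -(entryDeriv P r d * (P r)ᵀ) := by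
  have hconst : entryDeriv (fun s => P s * (P s)ᵀ) r d = 0 := by
    rw [← entryDeriv_const (1 : Matrix k k ℝ) r d]
    ext i j
    exact congrArg (fun L : E →L[ℝ] ℝ => L d) (EventuallyEq.fderiv_eq
      (hPP.mono fun s hs => congrFun (congrFun hs i) j))
  rw [entryDeriv_mul (Y := fun s => (P s)ᵀ) hP fun x i => hP i x] at hconst
  rw [transpose_mul, transpose_transpose]
  exact eq_neg_of_add_eq_zero_right hconst

lemma entryDeriv_compression {k : Type*} {P : E → Matrix k m ℝ}
    {A : E → Matrix m m ℝ} {r : E} (hP : ∀ i x, DifferentiableAt ℝ (fun s => P s i x) r)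
    (hA : ∀ x y, DifferentiableAt ℝ (fun s => A s x y) r) (d : E) :
    entryDeriv (fun s => P s * A s * (P s)ᵀ) r d = entryDeriv P r d * A r * (P r)ᵀ +
      P r * entryDeriv A r d * (P r)ᵀ + P r * A r * (entryDeriv P r d)ᵀ := by
  rw [entryDeriv_mul (Y := fun s => (P s)ᵀ) (differentiableAt_mul_apply hP hA) fun x i => hP i x,
    entryDeriv_mul hP hA, Matrix.add_mul]
  rfl

lemma entryDeriv_compression_eq_add_lie {k : Type*} [Fintype k] [DecidableEq k]
    {P : E → Matrix k m ℝ} {A : E → Matrix m m ℝ} {B : Matrix k k ℝ} {r : E}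
    (hP : ∀ i x, DifferentiableAt ℝ (fun s => P s i x) r)
    (hA : ∀ x y, DifferentiableAt ℝ (fun s => A s x y) r)
    (hPP : ∀ᶠ s in 𝓝 r, P s * (P s)ᵀ = 1) (hAP : A r * (P r)ᵀ = (P r)ᵀ * B)
    (hPA : P r * A r = B * P r) (d : E) :
    entryDeriv (fun s => P s * A s * (P s)ᵀ) r d =
      entryDeriv (fun s => P r * A s * (P r)ᵀ) r d + ⁅entryDeriv P r d * (P r)ᵀ, B⁆ := by
  have hskew : P r * (entryDeriv P r d)ᵀ = -(entryDeriv P r d * (P r)ᵀ) := by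
    rw [← transpose_entryDeriv_mul_transpose hP hPP, transpose_mul, transpose_transpose]
  have hfrozen := entryDeriv_compression (P := fun _ => P r)
    (fun _ _ => differentiableAt_const _) hA d
  rw [entryDeriv_const, transpose_zero, Matrix.zero_mul, Matrix.zero_mul, Matrix.mul_zero, zero_add,
    add_zero] at hfrozen
  rw [entryDeriv_compression hP hA, hfrozen, Matrix.mul_assoc (entryDeriv P r d), hAP, hPA,
    Matrix.mul_assoc B, hskew, Ring.lie_def, Matrix.mul_neg, Matrix.mul_assoc _ (P r)ᵀ B]
  abel

variable {S : E → Matrix (Fin 2) (Fin 2) ℝ} {r : E}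

lemma fderiv_target (hS : ∀ i j, DifferentiableAt ℝ (fun s => S s i j) r) :
    fderiv ℝ (fun s => target (S s)) r = (fderiv ℝ (fun s => S s 0 0 - S s 1 1) r).prod
      (fderiv ℝ (fun s => 2 * S s 0 1) r) :=
  ((hS 0 0).fun_sub (hS 1 1)).fderiv_prodMk ((hS 0 1).const_mul 2)

lemma fderiv_target_apply (hS : ∀ i j, DifferentiableAt ℝ (fun s => S s i j) r) (d : E) :
    fderiv ℝ (fun s => target (S s)) r d = target (entryDeriv S r d) := by
  rw [fderiv_target hS, fderiv_fun_sub (hS 0 0) (hS 1 1), fderiv_const_mul (hS 0 1)]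
  rfl

end MatrixCalculus

section Newton

open Filter Topology Asymptotics

variable {E F : Type*} [NormedAddCommGroup E] [NormedSpace ℝ E]
  [NormedAddCommGroup F] [NormedSpace ℝ F]

/-- The point `r - (f'(r))⁻¹ f(r)` reached from `r` by one step of Newton's method for `f`.
If `f'(r)` is not invertible the inverse is zero and the step does not move. -/
def newtonStep (f : E → F) (r : E) : E := r - (fderiv ℝ f r).inverse (f r)

lemma fderiv_eq_comp_of_eventuallyEq {f g : E → F} {r : E} {R : F ≃L[ℝ] F}
    (h : g =ᶠ[𝓝 r] R ∘ f) : fderiv ℝ g r = (R : F →L[ℝ] F) ∘L fderiv ℝ f r := by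
  rw [h.fderiv_eq, R.comp_fderiv]

lemma newtonStep_eq_of_eventuallyEq_comp {f g : E → F} {r : E} {R : F ≃L[ℝ] F}
    (h : g =ᶠ[𝓝 r] R ∘ f) : newtonStep g r = newtonStep f r := by
  simp only [newtonStep, fderiv_eq_comp_of_eventuallyEq h, h.eq_of_nhds,
    ContinuousLinearMap.inverse_equiv_comp, ContinuousLinearMap.comp_apply, Function.comp_apply,
    ContinuousLinearEquiv.coe_coe, ContinuousLinearEquiv.symm_apply_apply]

variable {ι : Type*} {l : Filter ι}

lemma clm_apply_isBigO {T : ι → E →L[ℝ] F} {x : ι → E} {f g : ι → ℝ} (hT : T =O[l] f)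
    (hx : x =O[l] g) : (fun t => T t (x t)) =O[l] fun t => f t * g t :=
  (isBoundedBilinearMap_apply.isBigO_comp (𝕜 := ℝ)).trans (hT.norm_left.mul hx.norm_left)

variable {L L' : ι → E →L[ℝ] F} {L₀ : E →L[ℝ] F}

lemma eventually_isInvertible [CompleteSpace E] (hL : Tendsto L l (𝓝 L₀))
    (hL₀ : L₀.IsInvertible) : ∀ᶠ t in l, (L t).IsInvertible := by
  obtain ⟨e, rfl⟩ := hL₀
  exact hL.eventually e.nhds

lemma isBigO_inverse_one [CompleteSpace E] (hL : Tendsto L l (𝓝 L₀)) (hL₀ : L₀.IsInvertible) :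
    (fun t => (L t).inverse) =O[l] fun _ => (1 : ℝ) := by
  have hcont : ContinuousAt ContinuousLinearMap.inverse L₀ :=
    (hL₀.contDiffAt_map_inverse (n := 0)).continuousAt
  exact (hcont.tendsto.comp hL).isBigO_one ℝ

lemma inverse_apply_sub_inverse_apply_isBigO [CompleteSpace E] {y : ι → F} {g : ι → ℝ}
    (hL : Tendsto L l (𝓝 L₀)) (hL' : Tendsto L' l (𝓝 L₀)) (hL₀ : L₀.IsInvertible)
    (hLL' : (fun t => L t - L' t) =O[l] g) (hy : y =O[l] g) :
    (fun t => (L t).inverse (y t) - (L' t).inverse (y t)) =O[l] fun t => g t ^ 2 := by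
  have hresolvent : (fun t => (L t).inverse (y t) - (L' t).inverse (y t)) =ᶠ[l]
      fun t => -(L t).inverse ((L t - L' t) ((L' t).inverse (y t))) := by
    filter_upwards [eventually_isInvertible hL hL₀, eventually_isInvertible hL' hL₀] with t ht ht'
    rw [_root_.sub_apply, ht'.self_apply_inverse, map_sub, ht.inverse_apply_self,
      neg_sub]
  refine IsBigO.congr' ?_ hresolvent.symm EventuallyEq.rfl
  have hbound := clm_apply_isBigO (isBigO_inverse_one hL hL₀)
    (clm_apply_isBigO hLL' (clm_apply_isBigO (isBigO_inverse_one hL' hL₀) hy))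
  exact hbound.neg_left.congr_right fun t => by ring

end Newton

section Planar

open Topology

/-- The matrix action `mulVec2` as a continuous linear map, so that derivatives of plane maps can
be compared with their Jacobian matrices. -/
def mulVec2CLM (M : Matrix (Fin 2) (Fin 2) ℝ) : ℝ × ℝ →L[ℝ] ℝ × ℝ :=
  LinearMap.toContinuousLinearMap
    (Matrix.toLin (Module.Basis.finTwoProd ℝ) (Module.Basis.finTwoProd ℝ) M)

lemma mulVec2CLM_apply (M : Matrix (Fin 2) (Fin 2) ℝ) (v : ℝ × ℝ) :
    mulVec2CLM M v = mulVec2 M v := by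
  rw [mulVec2CLM, LinearMap.coe_toContinuousLinearMap', eta_fin_two M]
  exact toLin_finTwoProd_apply _ _ _ _ v

lemma mulVec2CLM_mul (M N : Matrix (Fin 2) (Fin 2) ℝ) :
    mulVec2CLM (M * N) = mulVec2CLM M ∘L mulVec2CLM N :=
  ContinuousLinearMap.coe_injective (Matrix.toLin_mul _ _ _ M N)

lemma mulVec2CLM_one : mulVec2CLM 1 = ContinuousLinearMap.id ℝ (ℝ × ℝ) :=
  ContinuousLinearMap.coe_injective (Matrix.toLin_one _)

lemma mulVec2CLM_comp_inv {M : Matrix (Fin 2) (Fin 2) ℝ} (hM : M.det ≠ 0) :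
    mulVec2CLM M ∘L mulVec2CLM M⁻¹ = ContinuousLinearMap.id ℝ (ℝ × ℝ) := by
  rw [← mulVec2CLM_mul, mul_nonsing_inv _ (isUnit_iff_ne_zero.mpr hM), mulVec2CLM_one]

lemma mulVec2CLM_inv_comp {M : Matrix (Fin 2) (Fin 2) ℝ} (hM : M.det ≠ 0) :
    mulVec2CLM M⁻¹ ∘L mulVec2CLM M = ContinuousLinearMap.id ℝ (ℝ × ℝ) := by
  rw [← mulVec2CLM_mul, nonsing_inv_mul _ (isUnit_iff_ne_zero.mpr hM), mulVec2CLM_one]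

lemma isInvertible_mulVec2CLM_iff {M : Matrix (Fin 2) (Fin 2) ℝ} :
    (mulVec2CLM M).IsInvertible ↔ M.det ≠ 0 := by
  refine ⟨?_, fun hM => .of_inverse (mulVec2CLM_comp_inv hM) (mulVec2CLM_inv_comp hM)⟩
  rintro ⟨e, he⟩
  have hunit := e.toLinearEquiv.isUnit_det'
  have hdet : LinearMap.det (mulVec2CLM M : ℝ × ℝ →ₗ[ℝ] ℝ × ℝ) = M.det :=
    LinearMap.det_toLin _ M
  rw [← hdet, ← he]
  exact hunit.ne_zero

lemma inverse_mulVec2CLM (M : Matrix (Fin 2) (Fin 2) ℝ) :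
    (mulVec2CLM M).inverse = mulVec2CLM M⁻¹ := by
  by_cases hM : M.det = 0
  · rw [ContinuousLinearMap.inverse_of_not_isInvertible
      (isInvertible_mulVec2CLM_iff.not.mpr (not_not.mpr hM)),
      nonsing_inv_apply_not_isUnit _ (by simp [hM]), mulVec2CLM, map_zero, map_zero]
  · exact ContinuousLinearMap.inverse_eq (mulVec2CLM_comp_inv hM) (mulVec2CLM_inv_comp hM)

variable {S : ℝ × ℝ → Matrix (Fin 2) (Fin 2) ℝ} {r : ℝ × ℝ}

lemma fderiv_Ftar (hS : ∀ i j, DifferentiableAt ℝ (fun s => S s i j) r) :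
    fderiv ℝ (Ftar S) r = mulVec2CLM (Jmat S r) := by
  refine (fderiv_target hS).trans ?_
  ext <;> simp [mulVec2CLM_apply, mulVec2, Jmat, pdx, pdy]

lemma isInvertible_fderiv_Ftar_iff (hS : ∀ i j, DifferentiableAt ℝ (fun s => S s i j) r) :
    (fderiv ℝ (Ftar S) r).IsInvertible ↔ (Jmat S r).det ≠ 0 := by
  rw [fderiv_Ftar hS, isInvertible_mulVec2CLM_iff]

lemma newtonStep_Ftar (hS : ∀ i j, DifferentiableAt ℝ (fun s => S s i j) r) :
    newtonStep (Ftar S) r = r - mulVec2 (Jmat S r)⁻¹ (Ftar S r) := by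
  rw [newtonStep, fderiv_Ftar hS, inverse_mulVec2CLM, mulVec2CLM_apply]

lemma exists_equiv_Ftar_eventuallyEq_comp {T : ℝ × ℝ → Matrix (Fin 2) (Fin 2) ℝ}
    {Q : Matrix (Fin 2) (Fin 2) ℝ} (hQ : Q * Qᵀ = 1) (hS : ∀ᶠ s in 𝓝 r, (S s).IsSymm)
    (hT : ∀ᶠ s in 𝓝 r, T s = Q * S s * Qᵀ) :
    ∃ R : (ℝ × ℝ) ≃L[ℝ] ℝ × ℝ, ∀ᶠ s in 𝓝 r, Ftar T s = R (Ftar S s) := by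
  obtain ⟨R, hR⟩ := isInvertible_mulVec2CLM_iff.mpr (det_targetConj_ne_zero hQ)
  refine ⟨R, ?_⟩
  filter_upwards [hS, hT] with s hSs hTs
  calc target (T s) = mulVec2 (targetConj Q) (target (S s)) := by
        rw [hTs, target_mul_mul_transpose hQ hSs]
    _ = R (target (S s)) := by rw [← mulVec2CLM_apply, ← hR, ContinuousLinearEquiv.coe_coe]

end Planar

section MovingFrame

open Filter Topology Asymptotics

variable {E : Type*} [NormedAddCommGroup E] [NormedSpace ℝ E] {m k : Type*} [Fintype m]

/-- The orthonormal rows of `P r` span an `A r`-invariant subspace on which `A r` acts by the matrix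
`B r`, and `P` is continuously differentiable on `Ω`. The transposed columns of one block of an
orthogonal block diagonalization form such a frame. Frame vectors are rows, so that compressions
read `P A Pᵀ`. -/
structure IsInvariantFrame [Fintype k] [DecidableEq k] (A : E → Matrix m m ℝ)
    (P : E → Matrix k m ℝ) (B : E → Matrix k k ℝ) (Ω : Set E) : Prop where
  contDiffOn : ∀ i x, ContDiffOn ℝ 1 (fun r => P r i x) Ω
  mul_transpose : ∀ r ∈ Ω, P r * (P r)ᵀ = 1
  intertwines : ∀ r ∈ Ω, A r * (P r)ᵀ = (P r)ᵀ * B r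

namespace IsInvariantFrame

variable [Fintype k] [DecidableEq k] {A : E → Matrix m m ℝ} {P : E → Matrix k m ℝ}
  {B : E → Matrix k k ℝ} {Ω : Set E} {r : E}

lemma eq_compression (h : IsInvariantFrame A P B Ω) (hr : r ∈ Ω) : B r = P r * A r * (P r)ᵀ := by
  rw [Matrix.mul_assoc, h.intertwines r hr, ← Matrix.mul_assoc, h.mul_transpose r hr,
    Matrix.one_mul]

lemma isSymm (h : IsInvariantFrame A P B Ω) (hr : r ∈ Ω) (hA : (A r).IsSymm) : (B r).IsSymm := by
  rw [h.eq_compression hr, IsSymm, transpose_mul, transpose_mul, transpose_transpose, hA.eq,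
    Matrix.mul_assoc]

lemma intertwines_transpose (h : IsInvariantFrame A P B Ω) (hr : r ∈ Ω) (hA : (A r).IsSymm) :
    P r * A r = B r * P r := by
  have := congrArg transpose (h.intertwines r hr)
  rwa [transpose_mul, transpose_mul, transpose_transpose, hA.eq, (h.isSymm hr hA).eq] at this

lemma differentiableAt (h : IsInvariantFrame A P B Ω) (hΩ : IsOpen Ω) (hr : r ∈ Ω) (i : k) (x : m) :
    DifferentiableAt ℝ (fun s => P s i x) r :=
  ((h.contDiffOn i x).contDiffAt (hΩ.mem_nhds hr)).differentiableAt one_ne_zero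

end IsInvariantFrame

/-- The `(0, 1)` entry `⟨dp₀, p₁⟩` of the skew-symmetric connection matrix `P' Pᵀ` of a frame with
rows `p₀`, `p₁`. -/
def connectionForm (P : E → Matrix (Fin 2) m ℝ) (r : E) : E →L[ℝ] ℝ :=
  ∑ x, P r 1 x • fderiv ℝ (fun s => P s 0 x) r

lemma connectionForm_apply (P : E → Matrix (Fin 2) m ℝ) (r d : E) :
    connectionForm P r d = (entryDeriv P r d * (P r)ᵀ) 0 1 := by
  simp only [connectionForm, _root_.sum_apply, _root_.smul_apply, smul_eq_mul, mul_apply,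
    entryDeriv, of_apply, transpose_apply, mul_comm]

lemma continuousAt_connectionForm {P : E → Matrix (Fin 2) m ℝ} {r : E}
    (hP : ∀ i x, ContDiffAt ℝ 1 (fun s => P s i x) r) : ContinuousAt (connectionForm P) r :=
  tendsto_finsetSum _ fun x _ =>
    (hP 1 x).continuousAt.smul ((hP 0 x).continuousAt_fderiv one_ne_zero)

variable {A : E → Matrix m m ℝ} {P : E → Matrix (Fin 2) m ℝ} {B : E → Matrix (Fin 2) (Fin 2) ℝ}
  {Ω : Set E} {r : E}

/-- The target function `F` of the compression of `A` to the fixed frame formed by the rows of `Q`.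
For eigenvectors `Q` of `A r` it is `F(Ã^r)`. -/
def compressionTarget (A : E → Matrix m m ℝ) (Q : Matrix (Fin 2) m ℝ) (s : E) : ℝ × ℝ :=
  target (Q * A s * Qᵀ)

lemma IsInvariantFrame.fderiv_target_sub_fderiv_compressionTarget (h : IsInvariantFrame A P B Ω)
    (hΩ : IsOpen Ω) (hr : r ∈ Ω) (hA : ∀ x y, DifferentiableAt ℝ (fun s => A s x y) r)
    (hAsym : (A r).IsSymm) :
    fderiv ℝ (fun s => target (B s)) r - fderiv ℝ (compressionTarget A (P r)) r =
      (connectionForm P r).smulRight ((2 : ℝ) • ((target (B r)).2, -(target (B r)).1)) := by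
  have hP := h.differentiableAt hΩ hr
  have hB : (fun s => target (B s)) =ᶠ[𝓝 r] fun s => target (P s * A s * (P s)ᵀ) :=
    (hΩ.eventually_mem hr).mono fun s hs => congrArg target (h.eq_compression hs)
  have hPP : ∀ᶠ s in 𝓝 r, P s * (P s)ᵀ = 1 := (hΩ.eventually_mem hr).mono h.mul_transpose
  ext1 d
  have hfrozen : compressionTarget A (P r) = fun s => target (P r * A s * (P r)ᵀ) := rfl
  rw [hB.fderiv_eq, hfrozen, _root_.sub_apply,
    fderiv_target_apply (differentiableAt_compression hP hA),
    fderiv_target_apply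
      (differentiableAt_compression (P := fun _ => P r) (fun _ _ => differentiableAt_const _) hA),
    entryDeriv_compression_eq_add_lie hP hA hPP (h.intertwines r hr)
      (h.intertwines_transpose hr hAsym), target_add, add_sub_cancel_left,
    target_lie (transpose_entryDeriv_mul_transpose hP hPP d) (h.isSymm hr hAsym),
    ContinuousLinearMap.smulRight_apply, connectionForm_apply]

end MovingFrame

section EigenvectorPairs

open Topology

lemma tildeA_eq {n : ℕ} (A : ℝ × ℝ → Matrix (Fin n) (Fin n) ℝ) (v₁ v₂ : Fin n → ℝ)
    (s : ℝ × ℝ) : tildeA A v₁ v₂ s = of ![v₁, v₂] * A s * (of ![v₁, v₂])ᵀ := by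
  ext i j
  rw [Matrix.mul_assoc]
  fin_cases i <;> fin_cases j <;> rfl

variable {m : Type*} [Fintype m] {v₁ v₂ : m → ℝ}

lemma of_pair_mul_transpose (h₁ : v₁ ⬝ᵥ v₁ = 1) (h₂ : v₂ ⬝ᵥ v₂ = 1) (h₁₂ : v₁ ⬝ᵥ v₂ = 0) :
    of ![v₁, v₂] * (of ![v₁, v₂])ᵀ = 1 := by
  ext i j
  fin_cases i <;> fin_cases j
  exacts [h₁, h₁₂, (dotProduct_comm _ _).trans h₁₂, h₂]

lemma mul_of_pair_transpose {A : Matrix m m ℝ} {l₁ l₂ : ℝ} (h₁ : A *ᵥ v₁ = l₁ • v₁)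
    (h₂ : A *ᵥ v₂ = l₂ • v₂) :
    A * (of ![v₁, v₂])ᵀ = (of ![v₁, v₂])ᵀ * diagonal ![l₁, l₂] := by
  ext x j
  rw [mul_diagonal, mul_comm]
  fin_cases j
  exacts [congrFun h₁ x, congrFun h₂ x]

lemma charpoly_eq_charpoly_diagonal {B : Matrix (Fin 2) (Fin 2) ℝ} {l₁ l₂ : ℝ}
    (htr : B 0 0 + B 1 1 = l₁ + l₂) (hdet : B.det = l₁ * l₂) :
    B.charpoly = (diagonal ![l₁, l₂]).charpoly := by
  rw [charpoly_fin_two, charpoly_fin_two, trace_fin_two, htr, hdet, trace_diagonal, det_diagonal,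
    Fin.sum_univ_two, Fin.prod_univ_two]
  rfl

lemma mul_transpose_orthogonal {k : Type*} [DecidableEq k] {V P : Matrix k m ℝ}
    [Fintype k] (hV : V * Vᵀ = 1) (hVP : Pᵀ * (P * Vᵀ) = Vᵀ) :
    V * Pᵀ * (V * Pᵀ)ᵀ = 1 := by
  rw [transpose_mul, transpose_transpose, Matrix.mul_assoc, hVP, hV]

lemma exists_equiv_Ftar_tildeA_eventuallyEq_comp {n : ℕ} {A : ℝ × ℝ → Matrix (Fin n) (Fin n) ℝ}
    {P : Matrix (Fin 2) (Fin n) ℝ} {r : ℝ × ℝ} {v₁ v₂ : Fin n → ℝ}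
    (hA : ∀ᶠ s in 𝓝 r, (A s).IsSymm) (hV : of ![v₁, v₂] * (of ![v₁, v₂])ᵀ = 1)
    (hVP : Pᵀ * (P * (of ![v₁, v₂])ᵀ) = (of ![v₁, v₂])ᵀ) :
    ∃ R : (ℝ × ℝ) ≃L[ℝ] ℝ × ℝ,
      ∀ᶠ s in 𝓝 r, Ftar (tildeA A v₁ v₂) s = R (compressionTarget A P s) := by
  refine exists_equiv_Ftar_eventuallyEq_comp (mul_transpose_orthogonal hV hVP) ?_ ?_
  · filter_upwards [hA] with s hs
    rw [IsSymm, transpose_mul, transpose_mul, transpose_transpose, hs.eq, Matrix.mul_assoc]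
  · have hQP : of ![v₁, v₂] * Pᵀ * P = of ![v₁, v₂] := by
      rw [← transpose_inj, transpose_mul, transpose_mul, transpose_transpose, hVP]
    refine .of_forall fun s => ?_
    calc tildeA A v₁ v₂ s
        = of ![v₁, v₂] * Pᵀ * P * A s * (of ![v₁, v₂] * Pᵀ * P)ᵀ := by rw [hQP, tildeA_eq]
      _ = of ![v₁, v₂] * Pᵀ * (P * A s * Pᵀ) * (of ![v₁, v₂] * Pᵀ)ᵀ := by
        simp only [transpose_mul, Matrix.mul_assoc]

end EigenvectorPairs

section Comparison

open Filter Topology Asymptotics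

variable {E : Type*} [NormedAddCommGroup E] [NormedSpace ℝ E] {m : Type*} [Fintype m]
  {A : E → Matrix m m ℝ} {P : E → Matrix (Fin 2) m ℝ} {B : E → Matrix (Fin 2) (Fin 2) ℝ}
  {Ω : Set E} {α : E}

lemma contDiffAt_compression {k : Type*} {P : E → Matrix k m ℝ} {r : E}
    (hP : ∀ i x, ContDiffAt ℝ 1 (fun s => P s i x) r)
    (hA : ∀ x y, ContDiffAt ℝ 1 (fun s => A s x y) r) (i j : k) :
    ContDiffAt ℝ 1 (fun s => (P s * A s * (P s)ᵀ) i j) r := by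
  simp only [mul_apply, transpose_apply]
  fun_prop

namespace IsInvariantFrame

lemma eq_smul_one (h : IsInvariantFrame A P B Ω) (hα : α ∈ Ω) (hA : (A α).IsSymm) {μ : ℝ}
    (htr : B α 0 0 + B α 1 1 = μ + μ) (hdet : (B α).det = μ * μ) : B α = μ • 1 := by
  refine eq_smul_one_of_charpoly_eq_sq (h.isSymm hα hA) ?_
  rw [charpoly_fin_two, trace_fin_two, htr, hdet, map_add, map_mul]
  ring

lemma contDiffAt_block (h : IsInvariantFrame A P B Ω) (hΩ : IsOpen Ω)
    (hA : ∀ x y, ContDiffOn ℝ 1 (fun s => A s x y) Ω) {r : E} (hr : r ∈ Ω) (i j : Fin 2) :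
    ContDiffAt ℝ 1 (fun s => B s i j) r := by
  have hΩr := hΩ.mem_nhds hr
  refine (contDiffAt_compression (fun i x => (h.contDiffOn i x).contDiffAt hΩr)
    (fun x y => (hA x y).contDiffAt hΩr) i j).congr_of_eventuallyEq ?_
  filter_upwards [hΩr] with s hs
  rw [h.eq_compression hs]

lemma contDiffAt_target (h : IsInvariantFrame A P B Ω) (hΩ : IsOpen Ω)
    (hA : ∀ x y, ContDiffOn ℝ 1 (fun s => A s x y) Ω) {r : E} (hr : r ∈ Ω) :
    ContDiffAt ℝ 1 (fun s => target (B s)) r :=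
  have hB := h.contDiffAt_block hΩ hA hr
  ((hB 0 0).sub (hB 1 1)).prodMk (contDiffAt_const.mul (hB 0 1))

variable (h : IsInvariantFrame A P B Ω) (hΩ : IsOpen Ω) (hα : α ∈ Ω)
  (hA : ∀ x y, ContDiffOn ℝ 1 (fun s => A s x y) Ω) (hAsym : ∀ r ∈ Ω, (A r).IsSymm)
  (hzero : target (B α) = 0)
include h hΩ hα hA hzero

lemma target_isBigO : (fun r => target (B r)) =O[𝓝 α] fun r => r - α := by
  simpa only [hzero, sub_zero] using
    ((h.contDiffAt_target hΩ hA hα).differentiableAt one_ne_zero).isBigO_sub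

include hAsym

lemma fderiv_compressionTarget_eq :
    fderiv ℝ (compressionTarget A (P α)) α = fderiv ℝ (fun s => target (B s)) α := by
  have hdiff := h.fderiv_target_sub_fderiv_compressionTarget hΩ hα
    (fun x y => ((hA x y).contDiffAt (hΩ.mem_nhds hα)).differentiableAt one_ne_zero) (hAsym α hα)
  rw [hzero, Prod.fst_zero, Prod.snd_zero, neg_zero, Prod.mk_zero_zero, smul_zero,
    ContinuousLinearMap.smulRight_zero] at hdiff
  exact (sub_eq_zero.mp hdiff).symm

lemma fderiv_target_sub_isBigO :
    (fun r => fderiv ℝ (fun s => target (B s)) r - fderiv ℝ (compressionTarget A (P r)) r)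
      =O[𝓝 α] fun r => r - α := by
  have hformula : (fun r => fderiv ℝ (fun s => target (B s)) r -
      fderiv ℝ (compressionTarget A (P r)) r) =ᶠ[𝓝 α] fun r =>
        (connectionForm P r).smulRight ((2 : ℝ) • ((target (B r)).2, -(target (B r)).1)) := by
    filter_upwards [hΩ.mem_nhds hα] with r hr
    exact h.fderiv_target_sub_fderiv_compressionTarget hΩ hr
      (fun x y => ((hA x y).contDiffAt (hΩ.mem_nhds hr)).differentiableAt one_ne_zero) (hAsym r hr)
  have hω : connectionForm P =O[𝓝 α] fun _ => (1 : ℝ) :=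
    (continuousAt_connectionForm fun i x =>
      (h.contDiffOn i x).contDiffAt (hΩ.mem_nhds hα)).tendsto.isBigO_one ℝ
  have hF := h.target_isBigO hΩ hα hA hzero
  have hJF : (fun r => (2 : ℝ) • ((target (B r)).2, -(target (B r)).1)) =O[𝓝 α] fun r => r - α := by
    refine IsBigO.const_smul_left (c := (2 : ℝ)) (.prod_left ?_ ?_)
    · exact isBigO_snd_prod.trans hF
    · exact (isBigO_fst_prod.trans hF).neg_left
  refine IsBigO.congr' ?_ hformula.symm EventuallyEq.rfl
  exact .of_norm_norm ((hω.norm_left.mul hJF.norm_norm).congr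
    (fun r => (ContinuousLinearMap.norm_smulRight_apply _ _).symm) fun r => one_mul _)

lemma tendsto_fderiv_compressionTarget :
    Tendsto (fun r => fderiv ℝ (compressionTarget A (P r)) r) (𝓝 α)
      (𝓝 (fderiv ℝ (fun s => target (B s)) α)) := by
  have hcont := (h.contDiffAt_target hΩ hA hα).continuousAt_fderiv one_ne_zero
  have hdiff := (h.fderiv_target_sub_isBigO hΩ hα hA hAsym hzero).trans_tendsto
    (tendsto_sub_nhds_zero_iff.mpr tendsto_id)
  simpa only [sub_sub_cancel, sub_zero] using hcont.tendsto.sub hdiff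

lemma newtonStep_target_sub_isBigO [CompleteSpace E]
    (hinv : (fderiv ℝ (fun s => target (B s)) α).IsInvertible) :
    (fun r => newtonStep (fun s => target (B s)) r - newtonStep (compressionTarget A (P r)) r)
      =O[𝓝 α] fun r => ‖r - α‖ ^ 2 := by
  have hincr := inverse_apply_sub_inverse_apply_isBigO
    (h.tendsto_fderiv_compressionTarget hΩ hα hA hAsym hzero)
    ((h.contDiffAt_target hΩ hA hα).continuousAt_fderiv one_ne_zero) hinv
    ((h.fderiv_target_sub_isBigO hΩ hα hA hAsym hzero).symm.norm_right)
    (h.target_isBigO hΩ hα hA hzero).norm_right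
  refine hincr.congr' ?_ EventuallyEq.rfl
  filter_upwards [hΩ.mem_nhds hα] with r hr
  have hvalue : compressionTarget A (P r) r = target (B r) :=
    congrArg target (h.eq_compression hr).symm
  rw [newtonStep, newtonStep, hvalue, sub_sub_sub_cancel_left]

end IsInvariantFrame

end Comparison

section EigenvectorFrames

open Filter Topology Polynomial

variable {E : Type*} [NormedAddCommGroup E] [NormedSpace ℝ E] {m : Type*} [Fintype m]
  [DecidableEq m]

lemma continuous_aeval_charpoly_compression_add :
    Continuous fun X : Matrix m m ℝ × Matrix (Fin 2) m ℝ =>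
      aeval X.1 (X.2 * X.1 * X.2ᵀ).charpoly + X.2ᵀ * X.2 := by
  simp only [charpoly_fin_two, map_add, map_sub, map_mul, map_pow, aeval_X, aeval_C,
    Algebra.algebraMap_eq_smul_one]
  fun_prop

lemma IsInvariantFrame.isUnit_aeval_charpoly_add {A : E → Matrix m m ℝ}
    {P : E → Matrix (Fin 2) m ℝ} {B : E → Matrix (Fin 2) (Fin 2) ℝ} {Ω : Set E} {α : E}
    (h : IsInvariantFrame A P B Ω) (hα : α ∈ Ω) (hA : (A α).IsSymm) {μ : ℝ} (hB : B α = μ • 1)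
    (hrank : Fintype.card m ≤ (A α - μ • 1).rank + 2) :
    IsUnit (aeval (A α) (B α).charpoly + (P α)ᵀ * P α) := by
  have hχ : (B α).charpoly = (X - C μ) ^ 2 := by
    rw [hB, smul_one_eq_diagonal, charpoly_diagonal, Finset.prod_const, Finset.card_fin]
  have hAP : A α * (P α)ᵀ = μ • (P α)ᵀ := by
    rw [h.intertwines α hα, hB, Matrix.mul_smul, Matrix.mul_one]
  simpa only [hχ, map_pow, map_sub, aeval_X, aeval_C, Algebra.algebraMap_eq_smul_one] using
    isUnit_sub_smul_one_sq_add hA (h.mul_transpose α hα) hAP (by rwa [Fintype.card_fin])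

lemma IsInvariantFrame.eventually_isUnit_aeval_charpoly_add {A : E → Matrix m m ℝ}
    {P : E → Matrix (Fin 2) m ℝ} {B : E → Matrix (Fin 2) (Fin 2) ℝ} {Ω : Set E} {α : E}
    (h : IsInvariantFrame A P B Ω) (hΩ : IsOpen Ω) (hα : α ∈ Ω)
    (hA : ∀ x y, ContinuousAt (fun r => A r x y) α)
    (hunit : IsUnit (aeval (A α) (B α).charpoly + (P α)ᵀ * P α)) :
    ∀ᶠ r in 𝓝 α, IsUnit (aeval (A r) (B r).charpoly + (P r)ᵀ * P r) := by
  have hAcont : ContinuousAt A α :=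
    continuousAt_pi.mpr fun x => continuousAt_pi.mpr fun y => hA x y
  have hPcont : ContinuousAt P α := continuousAt_pi.mpr fun i => continuousAt_pi.mpr fun x =>
    ((h.contDiffOn i x).contDiffAt (hΩ.mem_nhds hα)).continuousAt
  have hdet := (continuous_aeval_charpoly_compression_add (m := m)).matrix_det.continuousAt.comp
    (hAcont.prodMk hPcont)
  rw [h.eq_compression hα, isUnit_iff_isUnit_det, isUnit_iff_ne_zero] at hunit
  filter_upwards [hdet.eventually_ne hunit, hΩ.mem_nhds hα] with r hr hrΩ
  rw [h.eq_compression hrΩ, isUnit_iff_isUnit_det, isUnit_iff_ne_zero]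
  exact hr

lemma IsInvariantFrame.jmat_tildeA_det_ne_zero_iff_and_newtonStep_eq {n : ℕ}
    {A : ℝ × ℝ → Matrix (Fin n) (Fin n) ℝ} {P : ℝ × ℝ → Matrix (Fin 2) (Fin n) ℝ}
    {B : ℝ × ℝ → Matrix (Fin 2) (Fin 2) ℝ} {Ω : Set (ℝ × ℝ)} {r : ℝ × ℝ}
    (h : IsInvariantFrame A P B Ω) (hΩ : IsOpen Ω) (hr : r ∈ Ω)
    (hA : ∀ x y, DifferentiableAt ℝ (fun s => A s x y) r) (hAsym : ∀ s ∈ Ω, (A s).IsSymm)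
    (hunit : IsUnit (aeval (A r) (B r).charpoly + (P r)ᵀ * P r))
    {l₁ l₂ : ℝ} (htr : B r 0 0 + B r 1 1 = l₁ + l₂) (hdet : (B r).det = l₁ * l₂)
    {v₁ v₂ : Fin n → ℝ} (hv₁ : A r *ᵥ v₁ = l₁ • v₁) (hv₂ : A r *ᵥ v₂ = l₂ • v₂)
    (h₁ : v₁ ⬝ᵥ v₁ = 1) (h₂ : v₂ ⬝ᵥ v₂ = 1) (h₁₂ : v₁ ⬝ᵥ v₂ = 0) :
    ((Jmat (tildeA A v₁ v₂) r).det ≠ 0 ↔ (fderiv ℝ (compressionTarget A (P r)) r).IsInvertible) ∧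
      r - mulVec2 (Jmat (tildeA A v₁ v₂) r)⁻¹ (Ftar (tildeA A v₁ v₂) r) =
        newtonStep (compressionTarget A (P r)) r := by
  have hspan : (P r)ᵀ * (P r * (of ![v₁, v₂])ᵀ) = (of ![v₁, v₂])ᵀ :=
    transpose_mul_mul_eq_self (h.mul_transpose r hr) (h.intertwines r hr)
      (mul_of_pair_transpose hv₁ hv₂) (charpoly_eq_charpoly_diagonal htr hdet) hunit
  obtain ⟨R, hR⟩ := exists_equiv_Ftar_tildeA_eventuallyEq_comp
    ((hΩ.eventually_mem hr).mono hAsym) (of_pair_mul_transpose h₁ h₂ h₁₂) hspan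
  have hdiff (i j : Fin 2) : DifferentiableAt ℝ (fun s => tildeA A v₁ v₂ s i j) r := by
    simp only [tildeA_eq]
    exact differentiableAt_compression (P := fun _ => of ![v₁, v₂])
      (fun _ _ => differentiableAt_const _) hA i j
  rw [← newtonStep_Ftar hdiff, ← isInvertible_fderiv_Ftar_iff hdiff,
    fderiv_eq_comp_of_eventuallyEq hR, ContinuousLinearMap.isInvertible_equiv_comp]
  exact ⟨Iff.rfl, newtonStep_eq_of_eventuallyEq_comp hR⟩

end EigenvectorFrames

section ConicalPoint

open Filter Topology

theorem stmt6_general {n : ℕ} {A : ℝ × ℝ → Matrix (Fin n) (Fin n) ℝ}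
    {P : ℝ × ℝ → Matrix (Fin 2) (Fin n) ℝ} {B : ℝ × ℝ → Matrix (Fin 2) (Fin 2) ℝ}
    {Ω : Set (ℝ × ℝ)} {α : ℝ × ℝ} (hΩ : IsOpen Ω) (hα : α ∈ Ω)
    (hA : ∀ x y, ContDiffOn ℝ 1 (fun r => A r x y) Ω) (hAsym : ∀ r ∈ Ω, (A r).IsSymm)
    (hframe : IsInvariantFrame A P B Ω) {lam₁ lam₂ : ℝ × ℝ → ℝ}
    (hBeig : ∀ r ∈ Ω, B r 0 0 + B r 1 1 = lam₁ r + lam₂ r ∧ (B r).det = lam₁ r * lam₂ r)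
    (hdeg : lam₁ α = lam₂ α) (hrank : n ≤ (A α - lam₁ α • 1).rank + 2)
    {w₁ w₂ : Fin n → ℝ} (hw₁ : A α *ᵥ w₁ = lam₁ α • w₁) (hw₂ : A α *ᵥ w₂ = lam₂ α • w₂)
    (hw₁n : w₁ ⬝ᵥ w₁ = 1) (hw₂n : w₂ ⬝ᵥ w₂ = 1) (hw₁₂ : w₁ ⬝ᵥ w₂ = 0)
    (hJα : (Jmat (tildeA A w₁ w₂) α).det ≠ 0) :
    ∃ Ω₂ ⊆ Ω, IsOpen Ω₂ ∧ α ∈ Ω₂ ∧ ∃ C₂ > 0, ∀ r ∈ Ω₂, ∀ v₁ v₂ : Fin n → ℝ,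
      A r *ᵥ v₁ = lam₁ r • v₁ → A r *ᵥ v₂ = lam₂ r • v₂ →
      v₁ ⬝ᵥ v₁ = 1 → v₂ ⬝ᵥ v₂ = 1 → v₁ ⬝ᵥ v₂ = 0 →
      (Jmat B r).det ≠ 0 ∧ (Jmat (tildeA A v₁ v₂) r).det ≠ 0 ∧
      ‖(r - mulVec2 (Jmat B r)⁻¹ (Ftar B r)) -
          (r - mulVec2 (Jmat (tildeA A v₁ v₂) r)⁻¹ (Ftar (tildeA A v₁ v₂) r))‖
        ≤ C₂ * ‖r - α‖ ^ 2 := by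
  have hAat {r} (hr : r ∈ Ω) (x y : Fin n) : ContDiffAt ℝ 1 (fun s => A s x y) r :=
    (hA x y).contDiffAt (hΩ.mem_nhds hr)
  have htilde {r} (hr : r ∈ Ω) (hunit : IsUnit _) {v₁ v₂} :=
    hframe.jmat_tildeA_det_ne_zero_iff_and_newtonStep_eq (v₁ := v₁) (v₂ := v₂) hΩ hr
      (fun x y => (hAat hr x y).differentiableAt one_ne_zero) hAsym hunit
      (hBeig r hr).1 (hBeig r hr).2
  have hBα : B α = lam₁ α • 1 := hframe.eq_smul_one hα (hAsym α hα)
    (by rw [(hBeig α hα).1, hdeg]) (by rw [(hBeig α hα).2, hdeg])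
  have hunit := hframe.isUnit_aeval_charpoly_add hα (hAsym α hα) hBα (by rwa [Fintype.card_fin])
  have hzero : target (B α) = 0 := by simp [target, hBα]
  have hinv : (fderiv ℝ (fun s => target (B s)) α).IsInvertible := by
    rw [← hframe.fderiv_compressionTarget_eq hΩ hα hA hAsym hzero]
    exact (htilde hα hunit hw₁ hw₂ hw₁n hw₂n hw₁₂).1.mp hJα
  obtain ⟨C, hC, hbound⟩ :=
    (hframe.newtonStep_target_sub_isBigO hΩ hα hA hAsym hzero hinv).exists_pos
  have hunits := hframe.eventually_isUnit_aeval_charpoly_add hΩ hα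
    (fun x y => (hAat hα x y).continuousAt) hunit
  have hJB := eventually_isInvertible
    ((hframe.contDiffAt_target hΩ hA hα).continuousAt_fderiv one_ne_zero) hinv
  have hJP := eventually_isInvertible
    (hframe.tendsto_fderiv_compressionTarget hΩ hα hA hAsym hzero) hinv
  obtain ⟨Ω₂, hΩ₂, hopen, hαΩ₂⟩ := eventually_nhds_iff.mp <|
    (hΩ.eventually_mem hα).and <| hunits.and <| hJB.and <| hJP.and hbound.bound
  refine ⟨Ω₂, fun r hr => (hΩ₂ r hr).1, hopen, hαΩ₂, C, hC, ?_⟩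
  intro r hr v₁ v₂ hv₁ hv₂ hv₁n hv₂n hv₁₂
  obtain ⟨hrΩ, hunitr, hJBr, hJPr, hdist⟩ := hΩ₂ r hr
  obtain ⟨hJ, hstep⟩ := htilde hrΩ hunitr hv₁ hv₂ hv₁n hv₂n hv₁₂
  have hBdiff (i j : Fin 2) := (hframe.contDiffAt_block hΩ hA hrΩ i j).differentiableAt one_ne_zero
  refine ⟨(isInvertible_fderiv_Ftar_iff hBdiff).mp hJBr, hJ.mpr hJPr, ?_⟩
  rw [norm_pow, norm_norm] at hdist
  rwa [hstep, ← newtonStep_Ftar hBdiff]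

end ConicalPoint

section BlockDiagonalization

lemma isInvariantFrame_of_blockDiagonalization {E : Type*} [NormedAddCommGroup E]
    [NormedSpace ℝ E] {m k : Type*} [Fintype m] [DecidableEq m] [Fintype k] [DecidableEq k]
    {A M : E → Matrix m m ℝ} {B : E → Matrix k k ℝ} {Ω : Set E} {e : k → m}
    (he : Function.Injective e) (hM : ∀ x y, ContDiffOn ℝ 1 (fun r => M r x y) Ω)
    (hMorth : ∀ r ∈ Ω, (M r)ᵀ * M r = 1)
    (hblock : ∀ r ∈ Ω, ∀ i j, ((M r)ᵀ * A r * M r) (e i) (e j) = B r i j)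
    (hoff : ∀ r ∈ Ω, ∀ y ∉ Set.range e, ∀ j, ((M r)ᵀ * A r * M r) y (e j) = 0) :
    IsInvariantFrame A (fun r => ((M r).submatrix id e)ᵀ) B Ω where
  contDiffOn i x := hM x (e i)
  mul_transpose r hr := by
    calc ((M r).submatrix id e)ᵀ * ((M r).submatrix id e)ᵀᵀ = ((M r)ᵀ * M r).submatrix e e := rfl
      _ = 1 := by rw [hMorth r hr, submatrix_one e he]
  intertwines r hr := by
    have hAM : A r * M r = M r * ((M r)ᵀ * A r * M r) := by
      rw [Matrix.mul_assoc, ← Matrix.mul_assoc (M r), mul_eq_one_comm.mp (hMorth r hr),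
        Matrix.one_mul]
    ext x j
    calc (A r * M r) x (e j) = ∑ y, M r x y * ((M r)ᵀ * A r * M r) y (e j) := by
          conv_lhs => rw [hAM, mul_apply]
      _ = ∑ i, M r x (e i) * B r i j := by
          refine (Fintype.sum_of_injective e he _ _ (fun y hy => ?_) fun i => ?_).symm
          · rw [hoff r hr y hy, mul_zero]
          · rw [hblock r hr]

lemma le_rank_sub_smul_one_add_two {n : ℕ} (hn : 2 < n) {A V : Matrix (Fin n) (Fin n) ℝ}
    {l : Fin n → ℝ} (hl : Monotone l) (hV : Vᵀ * V = 1) (hA : A = V * diagonal l * Vᵀ)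
    (hdeg : l ⟨0, by lia⟩ = l ⟨1, by lia⟩) (hgap : l ⟨1, by lia⟩ < l ⟨2, hn⟩) :
    n ≤ (A - l ⟨0, by lia⟩ • 1).rank + 2 := by
  have hs (k : Fin n) (hk : k ∉ ({⟨0, by lia⟩, ⟨1, by lia⟩} : Finset (Fin n))) :
      l k ≠ l ⟨0, by lia⟩ := by
    have hk2 : ⟨2, hn⟩ ≤ k := by
      simp only [Finset.mem_insert, Finset.mem_singleton, Fin.ext_iff] at hk
      exact Fin.mk_le_of_le_val (by lia)
    exact (hdeg.trans_lt (hgap.trans_le (hl hk2))).ne'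
  calc n = Fintype.card (Fin n) := (Fintype.card_fin n).symm
    _ ≤ (A - l ⟨0, by lia⟩ • 1).rank + Finset.card {⟨0, by lia⟩, ⟨1, by lia⟩} :=
      card_le_rank_sub_smul_one_add hV hA hs
    _ ≤ (A - l ⟨0, by lia⟩ • 1).rank + 2 := by grw [Finset.card_le_two]

end BlockDiagonalization

/-- Lemma 5 of the paper: near a non-degenerate conical point the
Newton steps computed from the smooth block `B` and from the recomputed eigenvector
block `Ã^r` differ by `O(|r − α|²)`. -/
theorem stmt6 {n : ℕ} (hn : 2 < n)
    (A : ℝ × ℝ → Matrix (Fin n) (Fin n) ℝ)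
    (hA : ∀ i j, ContDiff ℝ 2 fun r => A r i j)
    (hAsym : ∀ r, (A r)ᵀ = A r)
    (lam : ℝ × ℝ → Fin n → ℝ)
    (hmono : ∀ r, Monotone (lam r))
    (heig : ∀ r, ∃ V : Matrix (Fin n) (Fin n) ℝ,
      Vᵀ * V = 1 ∧ A r = V * diagonal (lam r) * Vᵀ)
    (α : ℝ × ℝ)
    (hdeg : lam α ⟨0, by omega⟩ = lam α ⟨1, by omega⟩)
    (hgap : lam α ⟨1, by omega⟩ < lam α ⟨2, by omega⟩)
    -- non-degeneracy of the conical point, via an orthonormal eigenpair at `α`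
    (w₁ w₂ : Fin n → ℝ)
    (hw₁ : (A α).mulVec w₁ = lam α ⟨0, by omega⟩ • w₁)
    (hw₂ : (A α).mulVec w₂ = lam α ⟨1, by omega⟩ • w₂)
    (hw₁n : w₁ ⬝ᵥ w₁ = 1) (hw₂n : w₂ ⬝ᵥ w₂ = 1) (hw₁₂ : w₁ ⬝ᵥ w₂ = 0)
    (hJα : (Jmat (tildeA A w₁ w₂) α).det ≠ 0)
    -- the smooth orthogonal block diagonalization near `α`
    (Ω : Set (ℝ × ℝ)) (hΩ : IsOpen Ω) (hαΩ : α ∈ Ω)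
    (M : ℝ × ℝ → Matrix (Fin n) (Fin n) ℝ)
    (hM : ∀ i j, ContDiffOn ℝ 2 (fun r => M r i j) Ω)
    (hMorth : ∀ r ∈ Ω, (M r)ᵀ * M r = 1)
    (B : ℝ × ℝ → Matrix (Fin 2) (Fin 2) ℝ)
    (hblock : ∀ r ∈ Ω, ∀ i j : Fin 2,
      ((M r)ᵀ * A r * M r) ⟨i.val, by have := i.isLt; omega⟩ ⟨j.val, by have := j.isLt; omega⟩
        = B r i j)
    (hoff : ∀ r ∈ Ω, ∀ i j : Fin n,
      (i.val < 2 ∧ 2 ≤ j.val) ∨ (2 ≤ i.val ∧ j.val < 2) → ((M r)ᵀ * A r * M r) i j = 0)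
    (hBeig : ∀ r ∈ Ω, B r 0 0 + B r 1 1 = lam r ⟨0, by omega⟩ + lam r ⟨1, by omega⟩ ∧
      (B r).det = lam r ⟨0, by omega⟩ * lam r ⟨1, by omega⟩) :
    ∃ Ω₂ ⊆ Ω, IsOpen Ω₂ ∧ α ∈ Ω₂ ∧ ∃ C₂ > 0, ∀ r ∈ Ω₂,
      ∀ v₁ v₂ : Fin n → ℝ,
        (A r).mulVec v₁ = lam r ⟨0, by omega⟩ • v₁ →
        (A r).mulVec v₂ = lam r ⟨1, by omega⟩ • v₂ →
        v₁ ⬝ᵥ v₁ = 1 → v₂ ⬝ᵥ v₂ = 1 → v₁ ⬝ᵥ v₂ = 0 →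
        (Jmat B r).det ≠ 0 ∧ (Jmat (tildeA A v₁ v₂) r).det ≠ 0 ∧
        ‖(r - mulVec2 (Jmat B r)⁻¹ (Ftar B r)) -
            (r - mulVec2 (Jmat (tildeA A v₁ v₂) r)⁻¹ (Ftar (tildeA A v₁ v₂) r))‖
          ≤ C₂ * ‖r - α‖ ^ 2 := by
  obtain ⟨V, hV, hAV⟩ := heig α
  have hframe : IsInvariantFrame A (fun r => ((M r).submatrix id (Fin.castLE hn.le))ᵀ) B Ω :=
    isInvariantFrame_of_blockDiagonalization (Fin.castLE_injective hn.le)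
      (fun i j => (hM i j).of_le one_le_two) hMorth hblock fun r hr y hy j =>
        hoff r hr y _ (.inr ⟨not_lt.mp fun hlt => hy ⟨⟨y, hlt⟩, rfl⟩, j.isLt⟩)
  exact stmt6_general hΩ hαΩ (fun i j => ((hA i j).of_le one_le_two).contDiffOn)
    (fun r _ => hAsym r) hframe hBeig hdeg
    (le_rank_sub_smul_one_add_two hn (hmono α) hV hAV hdeg hgap) hw₁ hw₂ hw₁n hw₂n hw₁₂ hJα
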